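/- arXiv:1605.08683 — 6 statements merged into one kernel-verified Lean document; each statement's English description precedes it below -/
import Mathlib

section
/- Let α ∈ ℝ with sin α ≠ 0 and let f : ℂ → ℂ be a polynomial function. Then for every z ∈ ℂ, B(F_α(B⁻¹f))(z) = f(e^{-iα} z). In other words, under the Bargmann transform the α-angle fractional Fourier transform corresponds to the composition operator f(z) ↦ f(e^{-iα}z) on entire functions. -/
open MeasureTheory Complex

/-- Integration against the Gaussian measure dλ(z) = π⁻¹ e^{-|z|²} dA(z) on ℂ. -/
noncomputable def gaussInt (F : ℂ → ℂ) : ℂ :=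
  (Real.pi : ℂ)⁻¹ * ∫ w : ℂ, F w * Complex.exp (-(‖w‖ : ℂ)^2)

/-- The Bargmann transform Bf(z) = (2/π)^{1/4} ∫ f(x) e^{2xz - x² - z²/2} dx. -/
noncomputable def Bargmann (f : ℝ → ℂ) (z : ℂ) : ℂ :=
  (((2 / Real.pi) ^ ((1:ℝ)/4) : ℝ) : ℂ) *
    ∫ x : ℝ, f x * Complex.exp (2*x*z - (x:ℂ)^2 - z^2/2)

/-- The inverse Bargmann transform B⁻¹F(x) = (2/π)^{1/4} ∫_ℂ F(z) e^{2xz̄ - x² - z̄²/2} dλ(z). -/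
noncomputable def BargmannInv (F : ℂ → ℂ) (x : ℝ) : ℂ :=
  (((2 / Real.pi) ^ ((1:ℝ)/4) : ℝ) : ℂ) *
    gaussInt (fun z => F z * Complex.exp (2*x*(starRingEnd ℂ z) - (x:ℂ)^2 - (starRingEnd ℂ z)^2/2))

/-- The α-angle fractional Fourier transform (for sin α ≠ 0). The square root
`(1 - i cot α) ^ (1/2)` is the principal one, whose argument lies in (-π/2, π/2]. -/
noncomputable def FrFT (α : ℝ) (f : ℝ → ℂ) (x : ℝ) : ℂ :=
  ((1 - Complex.I * Real.cot α) ^ ((1:ℂ)/2) / (Real.sqrt Real.pi : ℂ)) *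
    Complex.exp (Complex.I * (x:ℂ)^2 * Real.cot α) *
    ∫ t : ℝ, Complex.exp (-2 * Complex.I * ((x:ℂ) * t * (((Real.sin α)⁻¹ : ℝ) : ℂ)
      - ((Real.cot α : ℂ) / 2) * (t:ℂ)^2)) * f t

/-!
The coherent states `k_a(x) = e^{2xa - x² - a²/2 - |a|²/2}` reduce everything to Gaussian integrals
in one variable. By its very formula `B⁻¹f` is a superposition of the states `k_{w̄}`, weighted by
`f(w) e^{-|w|²/2}` up to a constant. With `ω = e^{-iα}`, completing the square gives
`F_α k_a = k_{ωa}`, while `B k_a(z)` is a constant multiple of `e^{az - |a|²/2}`. Both transforms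
may be applied under the integral sign because `‖k_a‖₁` does not depend on `a`. Hence
`B F_α B⁻¹ f(z) = ∫ f(w) e^{ω z w̄} dλ(w)`, and this is `f(ωz)` by the reproducing property of the
Fock space: translating `w` by `ωz` leaves an entire function integrated against a radial weight,
and averaging over circles centred at `0` evaluates it there.
-/

open scoped Real ComplexConjugate

section RotationAverage

variable {E : Type*} [NormedAddCommGroup E]

theorem measurePreserving_exp_mul_I_mul (θ : ℝ) :
    MeasurePreserving (fun u : ℂ ↦ exp (θ * I) * u) :=
  (rotation (Circle.exp θ)).measurePreserving

theorem integrable_comp_circleMap_mul {F : ℂ → E} (hF : Integrable F) (ν : Measure ℝ)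
    [IsFiniteMeasure ν] :
    Integrable (fun p : ℝ × ℂ ↦ F (circleMap 0 1 p.1 * p.2)) (ν.prod volume) := by
  have hshear : MeasurePreserving (fun p : ℝ × ℂ ↦ (p.1, circleMap 0 1 p.1 * p.2))
      (ν.prod volume) (ν.prod volume) := by
    refine (MeasurePreserving.id ν).skew_product (g := fun θ u ↦ circleMap 0 1 θ * u)
      (by fun_prop) (ae_of_all _ fun θ ↦ ?_)
    simpa [circleMap] using (measurePreserving_exp_mul_I_mul θ).map_eq
  exact hshear.integrable_comp_of_integrable (hF.comp_snd ν)

theorem integral_circleAverage_comp_mul [NormedSpace ℝ E] [CompleteSpace E] {F : ℂ → E}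
    (hF : Integrable F) :
    ∫ u, Real.circleAverage (fun s ↦ F (s * u)) 0 1 = ∫ u, F u := by
  have hrot (θ : ℝ) : ∫ u, F (circleMap 0 1 θ * u) = ∫ u, F u := by
    simpa [circleMap] using (measurePreserving_exp_mul_I_mul θ).integral_comp
      (Homeomorph.mulLeft₀ (exp (θ * I)) (exp_ne_zero _)).measurableEmbedding F
  have : IsFiniteMeasure (volume.restrict (Set.uIoc 0 (2 * π))) := ⟨by simp [Set.uIoc]⟩
  simp only [Real.circleAverage_def]
  rw [integral_smul, ← intervalIntegral_integral_swap (integrable_comp_circleMap_mul hF _)]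
  simp only [hrot, intervalIntegral.integral_const, sub_zero]
  rw [inv_smul_smul₀ Real.two_pi_pos.ne']

theorem integral_radial_smul_of_differentiable [NormedSpace ℂ E] [CompleteSpace E] {h : ℂ → E}
    {ρ : ℝ → ℂ} (hh : Differentiable ℂ h) (hint : Integrable fun u : ℂ ↦ ρ ‖u‖ • h u) :
    ∫ u : ℂ, ρ ‖u‖ • h u = (∫ u : ℂ, ρ ‖u‖) • h 0 := by
  have hmean (u : ℂ) :
      Real.circleAverage (fun s ↦ ρ ‖s * u‖ • h (s * u)) 0 1 = ρ ‖u‖ • h 0 := by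
    have hdiff : Differentiable ℂ fun s : ℂ ↦ ρ ‖u‖ • h (s * u) := by fun_prop
    calc
      _ = Real.circleAverage (fun s ↦ ρ ‖u‖ • h (s * u)) 0 1 :=
        Real.circleAverage_congr_sphere fun s hs ↦ by
          simp only [abs_one, mem_sphere_zero_iff_norm] at hs
          simp [hs]
      _ = ρ ‖u‖ • h 0 := by
        simpa using hdiff.diffContOnCl.circleAverage (c := 0) (R := 1)
  rw [← integral_circleAverage_comp_mul hint]
  simp only [hmean, integral_smul_const]

end RotationAverage

section Gaussian

theorem ofReal_mul_cpow {r : ℝ} (hr : 0 ≤ r) (x s : ℂ) :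
    (r * x) ^ s = (r : ℂ) ^ s * x ^ s := by
  rcases eq_or_ne s 0 with rfl | hs
  · simp
  rcases hr.eq_or_lt with rfl | hr
  · simp [hs]
  rcases eq_or_ne x 0 with rfl | hx
  · simp [hs]
  have hr0 : (r : ℂ) ≠ 0 := ofReal_ne_zero.mpr hr.ne'
  rw [cpow_def_of_ne_zero (mul_ne_zero hr0 hx), cpow_def_of_ne_zero hr0, cpow_def_of_ne_zero hx,
    log_ofReal_mul hr hx, ofReal_log hr.le, add_mul, exp_add]

theorem ofReal_sqrt_eq_cpow {r : ℝ} (hr : 0 ≤ r) : (√r : ℂ) = (r : ℂ) ^ ((1 : ℂ) / 2) := by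
  rw [Real.sqrt_eq_rpow, ofReal_cpow hr]
  norm_num

theorem cpow_half_div_sqrt_pi_mul_integral_cexp_quadratic {b : ℂ} (hb : 0 < b.re) (c d : ℂ) :
    b ^ ((1 : ℂ) / 2) / (√π : ℂ) * ∫ t : ℝ, exp (-b * t ^ 2 + c * t + d) =
      exp (c ^ 2 / (4 * b) + d) := by
  have hb0 : b ≠ 0 := by
    rintro rfl
    simp at hb
  have hsplit : (π / b : ℂ) ^ (1 / 2 : ℂ) = √π * (b ^ (1 / 2 : ℂ))⁻¹ := by
    have harg : b.arg ≠ π := fun h ↦ by linarith [(arg_eq_pi_iff.mp h).1]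
    rw [div_eq_mul_inv, ofReal_mul_cpow Real.pi_nonneg, inv_cpow _ _ harg,
      ofReal_sqrt_eq_cpow Real.pi_nonneg]
  have hcpow : b ^ (1 / 2 : ℂ) ≠ 0 := by simp [cpow_eq_zero_iff, hb0]
  have hsqrt : (√π : ℂ) ≠ 0 := by
    exact_mod_cast (Real.sqrt_pos.mpr Real.pi_pos).ne'
  rw [integral_cexp_quadratic (by simpa using hb), neg_neg, hsplit]
  field_simp
  ring_nf

theorem integrable_pow_norm_mul_exp_neg_mul_sq_norm {V : Type*} [NormedAddCommGroup V]
    [InnerProductSpace ℝ V] [FiniteDimensional ℝ V] [MeasurableSpace V] [BorelSpace V]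
    {b : ℝ} (hb : 0 < b) (n : ℕ) :
    Integrable fun v : V ↦ ‖v‖ ^ n * Real.exp (-b * ‖v‖ ^ 2) := by
  have hgauss : Integrable fun v : V ↦ Real.exp (-(b / 2) * ‖v‖ ^ 2) := by
    simpa [norm_exp, ← ofReal_pow, ← ofReal_ofNat, ← ofReal_div, ← ofReal_neg, ← ofReal_mul]
      using (GaussianFourier.integrable_cexp_neg_mul_sq_norm_add (b := ((b / 2 : ℝ) : ℂ))
        (by simpa using hb) 0 (0 : V)).norm
  refine (hgauss.const_mul (n.factorial * Real.exp (1 / (2 * b)))).mono' (by fun_prop)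
    (ae_of_all _ fun v ↦ ?_)
  have hpow : ‖v‖ ^ n ≤ n.factorial * Real.exp ‖v‖ := by
    have := Real.pow_div_factorial_le_exp ‖v‖ (norm_nonneg v) n
    rwa [div_le_iff₀' (by positivity)] at this
  have hlin : ‖v‖ ≤ 1 / (2 * b) + b / 2 * ‖v‖ ^ 2 := by
    have hsq : 1 / (2 * b) + b / 2 * ‖v‖ ^ 2 - ‖v‖ = (b * ‖v‖ - 1) ^ 2 / (2 * b) := by
      field_simp
      ring
    have : 0 ≤ (b * ‖v‖ - 1) ^ 2 / (2 * b) := by positivity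
    linarith
  rw [Real.norm_of_nonneg (by positivity)]
  calc
    ‖v‖ ^ n * Real.exp (-b * ‖v‖ ^ 2)
      ≤ n.factorial * Real.exp (1 / (2 * b) + b / 2 * ‖v‖ ^ 2) * Real.exp (-b * ‖v‖ ^ 2) := by
        gcongr
        exact hpow.trans (by gcongr)
    _ = n.factorial * Real.exp (1 / (2 * b)) * Real.exp (-(b / 2) * ‖v‖ ^ 2) := by
        rw [mul_assoc, mul_assoc, ← Real.exp_add, ← Real.exp_add]
        ring_nf

theorem integrable_eval_mul_exp_neg_mul_sq_norm (p : Polynomial ℂ) {b : ℝ} (hb : 0 < b) :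
    Integrable fun w : ℂ ↦ p.eval w * exp (-b * ‖w‖ ^ 2) := by
  induction p using Polynomial.induction_on' with
  | add p q hp hq => simpa only [Polynomial.eval_add, add_mul] using hp.fun_add hq
  | monomial n a =>
    refine ((integrable_pow_norm_mul_exp_neg_mul_sq_norm hb n).const_mul ‖a‖).mono'
      (Continuous.aestronglyMeasurable (by fun_prop)) (ae_of_all _ fun w ↦ le_of_eq ?_)
    simp [norm_exp, ← ofReal_pow, mul_assoc]

theorem integral_exp_neg_sq_norm : ∫ w : ℂ, exp (-(‖w‖ : ℂ) ^ 2) = π := by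
  simpa using GaussianFourier.integral_cexp_neg_mul_sq_norm (V := ℂ) (b := 1) (by simp)

theorem gaussInt_mul_exp_conj {f : ℂ → ℂ} (hf : Differentiable ℂ f)
    (hint : Integrable fun w : ℂ ↦ f w * exp (-‖w‖ ^ 2 / 2)) (ζ : ℂ) :
    gaussInt (fun w ↦ f w * exp (ζ * conj w)) = f ζ := by
  have hshift (u : ℂ) : f (u + ζ) * exp (ζ * conj (u + ζ)) * exp (-(‖u + ζ‖ : ℂ) ^ 2) =
      exp (-(‖u‖ : ℂ) ^ 2) • (f (u + ζ) * exp (-(conj ζ * u))) := by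
    rw [smul_eq_mul, mul_left_comm, ← exp_add, mul_assoc, ← exp_add, ← mul_conj', ← mul_conj']
    congr 2
    simp only [map_add]
    ring
  have hint' : Integrable fun w : ℂ ↦ f w * exp (ζ * conj w) * exp (-(‖w‖ : ℂ) ^ 2) := by
    refine (hint.mul_bdd (c := Real.exp (‖ζ‖ ^ 2 / 2))
      (g := fun w ↦ exp (ζ * conj w - ‖w‖ ^ 2 / 2)) (by fun_prop) (ae_of_all _ fun w ↦ ?_)).congr
      (ae_of_all _ fun w ↦ ?_)
    · rw [norm_exp, Real.exp_le_exp, sub_re]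
      have hre : (ζ * conj w).re ≤ ‖ζ‖ * ‖w‖ := by simpa using re_le_norm (ζ * conj w)
      have hsq : ((‖w‖ : ℂ) ^ 2 / 2).re = ‖w‖ ^ 2 / 2 := by norm_cast
      nlinarith [sq_nonneg (‖ζ‖ - ‖w‖)]
    · simp only [mul_assoc, ← exp_add]
      ring_nf
  have hmean : ∫ u : ℂ, exp (-(‖u‖ : ℂ) ^ 2) • (f (u + ζ) * exp (-(conj ζ * u))) =
      (∫ u : ℂ, exp (-(‖u‖ : ℂ) ^ 2)) • (f (0 + ζ) * exp (-(conj ζ * 0))) := by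
    refine integral_radial_smul_of_differentiable (ρ := fun r ↦ exp (-(r : ℂ) ^ 2))
      (h := fun u ↦ f (u + ζ) * exp (-(conj ζ * u))) (by fun_prop) ?_
    simpa only [hshift] using hint'.comp_add_right ζ
  rw [gaussInt, ← integral_add_right_eq_self _ ζ]
  simp only [hshift]
  rw [hmean, integral_exp_neg_sq_norm]
  simp [Real.pi_ne_zero]

end Gaussian

section CoherentState

/-- The coherent state centred at `a`: the Bargmann kernel `e^{2xa - x² - a²/2}` times
`e^{-|a|²/2}`, which makes the `L²` norm independent of `a`. -/
noncomputable def coherentState (a : ℂ) (x : ℝ) : ℂ :=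
  exp (2 * x * a - x ^ 2 - a ^ 2 / 2 - ‖a‖ ^ 2 / 2)

theorem norm_coherentState (a : ℂ) (x : ℝ) :
    ‖coherentState a x‖ = Real.exp (-(x - a.re) ^ 2) := by
  rw [coherentState, norm_exp, ← ofReal_pow ‖a‖, ← normSq_eq_norm_sq, normSq_apply]
  congr 1
  simp only [pow_two, ofReal_add, ofReal_mul, sub_re, mul_re, re_ofNat, ofReal_re, im_ofNat,
    ofReal_im, mul_zero, sub_zero, mul_im, zero_mul, add_zero, div_ofNat_re, add_re]
  ring

@[fun_prop]
theorem continuous_coherentState :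
    Continuous fun p : ℂ × ℝ ↦ coherentState p.1 p.2 := by
  unfold coherentState
  fun_prop

theorem integral_norm_coherentState (a : ℂ) : ∫ x, ‖coherentState a x‖ = √π := by
  simp only [norm_coherentState]
  rw [integral_sub_right_eq_self fun x ↦ Real.exp (-x ^ 2)]
  simpa using integral_gaussian 1

theorem integrable_coherentState (a : ℂ) : Integrable (coherentState a) := by
  rw [← integrable_norm_iff (by fun_prop)]
  refine .of_integral_ne_zero ?_
  rw [integral_norm_coherentState]
  positivity

variable {Y : Type*} [MeasurableSpace Y] {μ : Measure Y} {g a : Y → ℂ}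

theorem integrable_mul_coherentState_prod (hg : Integrable g μ)
    (ha : AEStronglyMeasurable a μ) :
    Integrable (fun p : Y × ℝ ↦ g p.1 * coherentState (a p.1) p.2) (μ.prod volume) := by
  have hcoh : AEStronglyMeasurable (fun p : Y × ℝ ↦ coherentState (a p.1) p.2)
      (μ.prod volume) :=
    Continuous.comp_aestronglyMeasurable (f := fun p : Y × ℝ ↦ (a p.1, p.2))
      continuous_coherentState (ha.comp_fst.prodMk measurable_snd.aestronglyMeasurable)
  refine (integrable_prod_iff (hg.aestronglyMeasurable.comp_fst.mul hcoh)).mpr ?_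
  refine ⟨ae_of_all _ fun y ↦ (integrable_coherentState (a y)).const_mul (g y), ?_⟩
  simpa only [Pi.mul_apply, norm_mul, integral_const_mul, integral_norm_coherentState]
    using hg.norm.mul_const √π

theorem integral_mul_integral_coherentState [SFinite μ] (hg : Integrable g μ)
    (ha : AEStronglyMeasurable a μ) {m : ℝ → ℂ} (hm : Measurable m) {M : ℝ}
    (hM : ∀ x, ‖m x‖ ≤ M) :
    ∫ x, m x * (∫ y, g y * coherentState (a y) x ∂μ) =
      ∫ y, g y * (∫ x, m x * coherentState (a y) x) ∂μ := by
  have hint : Integrable (fun p : Y × ℝ ↦ m p.2 * (g p.1 * coherentState (a p.1) p.2))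
      (μ.prod volume) :=
    (integrable_mul_coherentState_prod hg ha).bdd_mul
      (hm.comp measurable_snd).aestronglyMeasurable (ae_of_all _ fun p ↦ hM p.2)
  simp only [← integral_const_mul, mul_left_comm (g _)]
  exact (integral_integral_swap hint).symm

end CoherentState

section Bargmann

/-- The normalising constant `(2/π)^{1/4}` of the Bargmann transform and of its inverse. -/
noncomputable def bargmannConst : ℂ := ((2 / π) ^ ((1 : ℝ) / 4) : ℝ)

theorem bargmannConst_ne_zero : bargmannConst ≠ 0 := by
  have : (0 : ℝ) < (2 / π) ^ ((1 : ℝ) / 4) := by positivity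
  exact ofReal_ne_zero.mpr this.ne'

theorem bargmannConst_mul_self :
    bargmannConst * bargmannConst = (2 : ℂ) ^ ((1 : ℂ) / 2) / (√π : ℂ) := by
  have hsq : ((2 / π) ^ ((1 : ℝ) / 4) : ℝ) * (2 / π) ^ ((1 : ℝ) / 4) = √2 / √π := by
    rw [← Real.rpow_add (by positivity), ← Real.sqrt_div zero_le_two, Real.sqrt_eq_rpow]
    norm_num
  have hsqrt : (2 : ℂ) ^ ((1 : ℂ) / 2) = √2 := (ofReal_sqrt_eq_cpow zero_le_two).symm
  rw [bargmannConst, hsqrt]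
  exact_mod_cast hsq

theorem Bargmann_coherentState (a z : ℂ) :
    Bargmann (coherentState a) z = bargmannConst⁻¹ * exp (a * z - ‖a‖ ^ 2 / 2) := by
  have hexp (x : ℝ) : coherentState a x * exp (2 * x * z - x ^ 2 - z ^ 2 / 2) =
      exp (-2 * x ^ 2 + (2 * a + 2 * z) * x + (-a ^ 2 / 2 - ‖a‖ ^ 2 / 2 - z ^ 2 / 2)) := by
    rw [coherentState, ← exp_add]
    ring_nf
  rw [eq_inv_mul_iff_mul_eq₀ bargmannConst_ne_zero, Bargmann, ← bargmannConst, ← mul_assoc,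
    bargmannConst_mul_self]
  simp only [hexp]
  rw [cpow_half_div_sqrt_pi_mul_integral_cexp_quadratic (by simp)]
  ring_nf

theorem norm_bargmannKernel_le (z : ℂ) (x : ℝ) :
    ‖exp (2 * x * z - x ^ 2 - z ^ 2 / 2)‖ ≤ Real.exp (‖z‖ ^ 2 / 2) := by
  have hsplit : exp (2 * x * z - x ^ 2 - z ^ 2 / 2) =
      (Real.exp (‖z‖ ^ 2 / 2) : ℂ) * coherentState z x := by
    rw [coherentState, ofReal_exp, ← exp_add]
    push_cast
    ring_nf
  rw [hsplit, norm_mul, norm_coherentState, norm_real,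
    Real.norm_of_nonneg (Real.exp_nonneg _)]
  refine mul_le_of_le_one_right (Real.exp_nonneg _) (Real.exp_le_one_iff.mpr ?_)
  linarith [sq_nonneg (x - z.re)]

theorem Bargmann_integral_coherentState {Y : Type*} [MeasurableSpace Y] {μ : Measure Y}
    [SFinite μ] {g a : Y → ℂ} (hg : Integrable g μ) (ha : AEStronglyMeasurable a μ) (z : ℂ) :
    Bargmann (fun x ↦ ∫ y, g y * coherentState (a y) x ∂μ) z =
      ∫ y, g y * Bargmann (coherentState (a y)) z ∂μ := by
  simp only [Bargmann, mul_left_comm (g _), integral_const_mul, mul_comm _ (exp _)]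
  rw [integral_mul_integral_coherentState hg ha (by fun_prop) (norm_bargmannKernel_le z)]

theorem BargmannInv_eq_integral_coherentState (F : ℂ → ℂ) (x : ℝ) :
    BargmannInv F x = ∫ w, bargmannConst * (π : ℂ)⁻¹ * (F w * exp (-‖w‖ ^ 2 / 2)) *
      coherentState (conj w) x := by
  rw [BargmannInv, gaussInt, ← bargmannConst, ← mul_assoc, ← integral_const_mul]
  refine integral_congr_ae (ae_of_all _ fun w ↦ ?_)
  simp only [coherentState, mul_assoc, ← exp_add, RCLike.norm_conj]
  ring_nf

end Bargmann

section FrFT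

theorem exp_neg_I_mul_ofReal (α : ℝ) :
    exp (-(I * α)) = Real.cos α - I * Real.sin α := by
  have hcomm : -(I * (α : ℂ)) = -α * I := by ring
  rw [hcomm, exp_mul_I, cos_neg, sin_neg, ofReal_cos, ofReal_sin]
  ring

theorem exp_neg_I_mul_ofReal_sq (α : ℝ) :
    exp (-(I * α)) ^ 2 = 1 - 2 * I * Real.sin α * exp (-(I * α)) := by
  have htrig : (Real.sin α : ℂ) ^ 2 + (Real.cos α : ℂ) ^ 2 = 1 := by
    exact_mod_cast Real.sin_sq_add_cos_sq α
  rw [exp_neg_I_mul_ofReal]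
  linear_combination htrig - (Real.sin α : ℂ) ^ 2 * I_sq

theorem ofReal_cot_eq_exp_neg_I_mul (α : ℝ) :
    (Real.cot α : ℂ) = (exp (-(I * α)) + I * Real.sin α) / Real.sin α := by
  rw [exp_neg_I_mul_ofReal, Real.cot_eq_cos_div_sin, ofReal_div, sub_add_cancel]

variable {α : ℝ}

theorem one_sub_I_mul_cot_inv (hα : Real.sin α ≠ 0) :
    (1 - I * Real.cot α)⁻¹ = I * Real.sin α * exp (-(I * α)) := by
  have hS : (Real.sin α : ℂ) ≠ 0 := ofReal_ne_zero.mpr hα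
  have hsq := exp_neg_I_mul_ofReal_sq α
  refine inv_eq_of_mul_eq_one_right ?_
  rw [ofReal_cot_eq_exp_neg_I_mul]
  generalize exp (-(I * α)) = ω at *
  generalize (Real.sin α : ℂ) = S at *
  field_simp
  linear_combination hsq - (ω ^ 2 + I * S * ω) * I_sq

theorem frft_exponent_eq (hα : Real.sin α ≠ 0) (a x : ℂ) :
    I * x ^ 2 * Real.cot α + ((2 * a - 2 * I * x * ((Real.sin α)⁻¹ : ℝ)) ^ 2 /
        (4 * (1 - I * Real.cot α)) - a ^ 2 / 2) =
      2 * x * (exp (-(I * α)) * a) - x ^ 2 - (exp (-(I * α)) * a) ^ 2 / 2 := by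
  have hS : (Real.sin α : ℂ) ≠ 0 := ofReal_ne_zero.mpr hα
  have hsq := exp_neg_I_mul_ofReal_sq α
  rw [div_eq_mul_inv _ (4 * _), mul_inv, one_sub_I_mul_cot_inv hα, ofReal_cot_eq_exp_neg_I_mul,
    ofReal_inv]
  generalize exp (-(I * α)) = ω at *
  generalize (Real.sin α : ℂ) = S at *
  field_simp
  linear_combination
    8 * (x ^ 2 * S + I * x ^ 2 * ω - 2 * x * a * ω * S) * I_sq + 4 * S * a ^ 2 * hsq

theorem FrFT_coherentState (hα : Real.sin α ≠ 0) (a : ℂ) (x : ℝ) :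
    FrFT α (coherentState a) x = coherentState (exp (-(I * α)) * a) x := by
  have hb : 0 < (1 - I * Real.cot α).re := by simp [-ofReal_cot]
  have hexp (t : ℝ) :
      exp (-2 * I * (x * t * ((Real.sin α)⁻¹ : ℝ) - Real.cot α / 2 * t ^ 2)) *
        coherentState a t = exp (-(1 - I * Real.cot α) * t ^ 2 +
          (2 * a - 2 * I * x * ((Real.sin α)⁻¹ : ℝ)) * t + (-a ^ 2 / 2 - ‖a‖ ^ 2 / 2)) := by
    rw [coherentState, ← exp_add]
    ring_nf
  have hnorm : ‖exp (-(I * α)) * a‖ = ‖a‖ := by simp [norm_exp]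
  simp only [FrFT, hexp]
  rw [mul_right_comm, cpow_half_div_sqrt_pi_mul_integral_cexp_quadratic hb, ← exp_add,
    coherentState, hnorm, ← frft_exponent_eq hα]
  ring_nf

theorem norm_frftKernel (x t : ℝ) :
    ‖exp (-2 * I * (x * t * ((Real.sin α)⁻¹ : ℝ) - Real.cot α / 2 * t ^ 2))‖ = 1 := by
  convert norm_exp_ofReal_mul_I (-2 * (x * t * (Real.sin α)⁻¹ - Real.cot α / 2 * t ^ 2)) using 3
  push_cast
  ring

theorem FrFT_integral_coherentState {Y : Type*} [MeasurableSpace Y] {μ : Measure Y}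
    [SFinite μ] {g a : Y → ℂ} (hg : Integrable g μ) (ha : AEStronglyMeasurable a μ) (x : ℝ) :
    FrFT α (fun t ↦ ∫ y, g y * coherentState (a y) t ∂μ) x =
      ∫ y, g y * FrFT α (coherentState (a y)) x ∂μ := by
  simp only [FrFT, mul_left_comm (g _), integral_const_mul]
  rw [integral_mul_integral_coherentState hg ha (by fun_prop) fun t ↦ (norm_frftKernel x t).le]

end FrFT

theorem gaussDensity_mul_Bargmann_coherentState {ω : ℂ} (hω : ‖ω‖ = 1) (c w z : ℂ) :
    bargmannConst * (π : ℂ)⁻¹ * (c * exp (-‖w‖ ^ 2 / 2)) * Bargmann (coherentState (ω * conj w)) z =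
      (π : ℂ)⁻¹ * (c * exp (ω * z * conj w) * exp (-‖w‖ ^ 2)) := by
  have hnorm : ‖ω * conj w‖ = ‖w‖ := by rw [norm_mul, hω, one_mul, RCLike.norm_conj]
  have hexp : exp (-‖w‖ ^ 2 / 2) * exp (ω * conj w * z - ‖w‖ ^ 2 / 2) =
      exp (ω * z * conj w) * exp (-‖w‖ ^ 2) := by
    rw [← exp_add, ← exp_add]
    ring_nf
  have hconst : bargmannConst * bargmannConst⁻¹ = 1 := mul_inv_cancel₀ bargmannConst_ne_zero
  rw [Bargmann_coherentState, hnorm]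
  linear_combination (π : ℂ)⁻¹ * c * exp (-‖w‖ ^ 2 / 2) *
    exp (ω * conj w * z - ‖w‖ ^ 2 / 2) * hconst + (π : ℂ)⁻¹ * c * hexp

theorem bargmann_frft_general {α : ℝ} (hα : Real.sin α ≠ 0) {f : ℂ → ℂ}
    (hf : Differentiable ℂ f) (hint : Integrable fun w : ℂ ↦ f w * exp (-‖w‖ ^ 2 / 2)) (z : ℂ) :
    Bargmann (FrFT α (BargmannInv f)) z = f (exp (-(I * α)) * z) := by
  set ω := exp (-(I * α))
  set g : ℂ → ℂ := fun w ↦ bargmannConst * (π : ℂ)⁻¹ * (f w * exp (-‖w‖ ^ 2 / 2))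
  have hω : ‖ω‖ = 1 := by simp [ω, norm_exp]
  have hg : Integrable g := hint.const_mul _
  have hinv : BargmannInv f = fun x ↦ ∫ w, g w * coherentState (conj w) x :=
    funext (BargmannInv_eq_integral_coherentState f)
  have hfrft : FrFT α (BargmannInv f) = fun x ↦ ∫ w, g w * coherentState (ω * conj w) x := by
    funext x
    rw [hinv, FrFT_integral_coherentState hg (by fun_prop)]
    simp only [FrFT_coherentState hα, ω]
  calc
    Bargmann (FrFT α (BargmannInv f)) z = ∫ w, g w * Bargmann (coherentState (ω * conj w)) z := by
      rw [hfrft, Bargmann_integral_coherentState hg (by fun_prop)]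
    _ = gaussInt fun w ↦ f w * exp (ω * z * conj w) := by
      simp only [g, gaussDensity_mul_Bargmann_coherentState hω, integral_const_mul, gaussInt]
    _ = f (ω * z) := gaussInt_mul_exp_conj hf hint _

/-- Under the Bargmann transform, the α-angle fractional Fourier transform corresponds to the
composition operator f(z) ↦ f(e^{-iα}z): for polynomial f, B(F_α(B⁻¹f))(z) = f(e^{-iα}z). -/
theorem bargmann_frft (α : ℝ) (hα : Real.sin α ≠ 0) (p : Polynomial ℂ) (f : ℂ → ℂ)
    (hf : ∀ z, f z = p.eval z) (z : ℂ) :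
    Bargmann (FrFT α (BargmannInv f)) z = f (Complex.exp (-(Complex.I * α)) * z) := by
  obtain rfl : f = fun w ↦ p.eval w := funext hf
  exact bargmann_frft_general hα p.differentiable
    (by simpa [div_eq_inv_mul] using integrable_eval_mul_exp_neg_mul_sq_norm p one_half_pos) z
end

section
/- Let α ∈ ℝ with sin α ≠ 0 and let f(x) = p(x) e^{-x²} where p is a complex polynomial. Then ∫_ℝ |F_α f(x)|² dx = ∫_ℝ |f(x)|² dx (Plancherel's formula for the fractional Fourier transform on this dense class of functions). -/
open MeasureTheory Complex

/-!
Up to unimodular chirps, `FrFT α f` is the ordinary Fourier transform of `f` times a chirp, read at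
`x / (π sin α)`. The modulus squared of the prefactor, `1 / (π |sin α|)`, is the inverse of the
Jacobian of this dilation, so everything reduces to the classical Plancherel theorem. On `L¹ ∩ L²`
the latter holds for the integral transform because that transform and the isometry of `L²` pair in
the same way with test functions: both are self-adjoint.
-/

section Plancherel

open FourierTransform SchwartzMap

open scoped ContDiff

variable {V F : Type*} [NormedAddCommGroup V] [InnerProductSpace ℝ V] [FiniteDimensional ℝ V]
  [MeasurableSpace V] [BorelSpace V] [NormedAddCommGroup F]

lemma continuous_fourier_of_integrable [NormedSpace ℂ F] {f : V → F} (hf : Integrable f) :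
    Continuous (𝓕 f) :=
  VectorFourier.fourierIntegral_continuous Real.continuous_fourierChar continuous_inner hf

lemma integral_fourier_smul_eq_of_integrable [NormedSpace ℂ F] [CompleteSpace F]
    {g : V → ℂ} {f : V → F} (hg : Integrable g) (hf : Integrable f) :
    ∫ ξ, 𝓕 g ξ • f ξ = ∫ x, g x • 𝓕 f x := by
  simpa only [flip_innerₗ] using! VectorFourier.integral_fourierIntegral_smul_eq_flip
    (L := innerₗ V) Real.continuous_fourierChar continuous_inner hg hf

variable [InnerProductSpace ℂ F] [CompleteSpace F]

lemma integral_smul_Lp_fourier (g : 𝓢(V, ℂ)) (u : Lp F 2 (volume : Measure V)) :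
    ∫ ξ, g ξ • (𝓕 u : Lp F 2 (volume : Measure V)) ξ = ∫ x, 𝓕 g x • u x := by
  simpa only [TemperedDistribution.fourier_apply, Lp.toTemperedDistribution_apply] using
    congr($(Lp.fourier_toTemperedDistribution_eq u) g).symm

lemma integral_norm_sq_Lp_fourier (u : Lp F 2 (volume : Measure V)) :
    ∫ ξ, ‖(𝓕 u : Lp F 2 (volume : Measure V)) ξ‖ ^ 2 = ∫ x, ‖u x‖ ^ 2 := by
  apply Complex.ofRealLI.injective
  have hinner := Lp.inner_fourier_eq u u
  rw [L2.inner_def, L2.inner_def] at hinner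
  simpa [← LinearIsometry.integral_comp_comm, inner_self_eq_norm_sq_to_K] using hinner

lemma fourier_toLp_ae_eq_fourier {f : V → F} (hf₁ : Integrable f) (hf₂ : MemLp f 2) :
    (𝓕 (hf₂.toLp f) : Lp F 2 (volume : Measure V)) =ᵐ[volume] 𝓕 f := by
  refine ae_eq_of_integral_contDiff_smul_eq ((Lp.memLp _).locallyIntegrable one_le_two)
    (continuous_fourier_of_integrable hf₁).locallyIntegrable fun g hg_smooth hg_supp ↦ ?_
  have hg_supp' : HasCompactSupport (ofRealCLM ∘ g) := hg_supp.comp_left rfl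
  let φ : 𝓢(V, ℂ) := hg_supp'.toSchwartzMap (by fun_prop)
  have hφ (h : V → F) : ∫ x, φ x • h x = ∫ x, g x • h x := by simp [φ]
  calc ∫ ξ, g ξ • (𝓕 (hf₂.toLp f) : Lp F 2 (volume : Measure V)) ξ
      = ∫ x, 𝓕 φ x • (hf₂.toLp f : V → F) x := by rw [← hφ, integral_smul_Lp_fourier]
    _ = ∫ x, 𝓕 φ x • f x :=
        integral_congr_ae (hf₂.coeFn_toLp.mono fun x hx ↦ congr(𝓕 φ x • $hx))
    _ = ∫ ξ, g ξ • 𝓕 f ξ := by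
        rw [fourier_coe, integral_fourier_smul_eq_of_integrable φ.integrable hf₁, hφ]

theorem integral_norm_sq_fourier_of_integrable_of_memLp_two {f : V → F} (hf₁ : Integrable f)
    (hf₂ : MemLp f 2) : ∫ ξ, ‖𝓕 f ξ‖ ^ 2 = ∫ x, ‖f x‖ ^ 2 := by
  calc ∫ ξ, ‖𝓕 f ξ‖ ^ 2
      = ∫ ξ, ‖(𝓕 (hf₂.toLp f) : Lp F 2 (volume : Measure V)) ξ‖ ^ 2 := integral_congr_ae
        ((fourier_toLp_ae_eq_fourier hf₁ hf₂).mono fun ξ hξ ↦ congr(‖$hξ‖ ^ 2).symm)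
    _ = ∫ x, ‖(hf₂.toLp f : V → F) x‖ ^ 2 := integral_norm_sq_Lp_fourier _
    _ = ∫ x, ‖f x‖ ^ 2 := integral_congr_ae (hf₂.coeFn_toLp.mono fun x hx ↦ congr(‖$hx‖ ^ 2))

end Plancherel

section Chirp

/-- The linear chirp `t ↦ exp (i c t²)` of rate `c`, the unimodular factor by which the fractional
Fourier transform of angle `α`, with `c = cot α`, differs from a rescaled Fourier transform. -/
noncomputable def chirp (c t : ℝ) : ℂ := Complex.exp ((c * t ^ 2 : ℝ) * I)

lemma norm_chirp (c t : ℝ) : ‖chirp c t‖ = 1 := norm_exp_ofReal_mul_I _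

lemma continuous_chirp (c : ℝ) : Continuous (chirp c) := by
  unfold chirp
  fun_prop

lemma norm_chirp_mul (c t : ℝ) (z : ℂ) : ‖chirp c t * z‖ = ‖z‖ := by
  rw [norm_mul, norm_chirp, one_mul]

lemma memLp_chirp_mul {p : ENNReal} {μ : Measure ℝ} {f : ℝ → ℂ} (hf : MemLp f p μ) (c : ℝ) :
    MemLp (fun t ↦ chirp c t * f t) p μ :=
  hf.of_le ((continuous_chirp c).aestronglyMeasurable.mul hf.1)
    (.of_forall fun t ↦ (norm_chirp_mul c t (f t)).le)

end Chirp

section FractionalFourier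

open FourierTransform

lemma frFT_eq_chirp_mul_fourier (α : ℝ) (f : ℝ → ℂ) (x : ℝ) :
    FrFT α f x = (1 - I * Real.cot α) ^ ((1 : ℂ) / 2) / (√Real.pi : ℂ) * chirp (Real.cot α) x *
      𝓕 (fun t ↦ chirp (Real.cot α) t * f t) (x / (Real.pi * Real.sin α)) := by
  have hfreq (t : ℝ) : -2 * Real.pi * t * (x / (Real.pi * Real.sin α)) =
      -2 * (x * t * (Real.sin α)⁻¹) := by
    field_simp
  have hkernel (t : ℝ) :
      Complex.exp (-2 * I * (x * t * ((Real.sin α)⁻¹ : ℝ) - Real.cot α / 2 * t ^ 2)) =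
        Complex.exp ((-2 * Real.pi * t * (x / (Real.pi * Real.sin α)) : ℝ) * I) *
          chirp (Real.cot α) t := by
    rw [chirp, ← Complex.exp_add, hfreq]
    push_cast
    ring_nf
  have hchirp : Complex.exp (I * x ^ 2 * Real.cot α) = chirp (Real.cot α) x := by
    rw [chirp]
    push_cast
    ring_nf
  simp_rw [FrFT, Real.fourier_real_eq_integral_exp_smul, hkernel, hchirp, smul_eq_mul, mul_assoc]

lemma norm_one_sub_I_mul_cot {α : ℝ} (hα : Real.sin α ≠ 0) :
    ‖1 - I * (Real.cot α : ℂ)‖ = |Real.sin α|⁻¹ := by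
  have hpolar : 1 - I * (Real.cot α : ℂ) = -I * Complex.exp (α * I) / Real.sin α := by
    have : (Real.sin α : ℂ) ≠ 0 := ofReal_ne_zero.2 hα
    rw [Real.cot_eq_cos_div_sin, exp_mul_I]
    push_cast at *
    field_simp
    linear_combination Complex.sin α * I_sq
  rw [hpolar, norm_div, norm_mul, norm_exp_ofReal_mul_I, norm_neg, norm_I, norm_real,
    Real.norm_eq_abs, one_mul, one_div]

lemma norm_cpow_half_sq (z : ℂ) : ‖z ^ ((1 : ℂ) / 2)‖ ^ 2 = ‖z‖ := by
  rw [← norm_pow, ← cpow_nat_mul]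
  simp

lemma norm_sq_frFT {α : ℝ} (hα : Real.sin α ≠ 0) (f : ℝ → ℂ) (x : ℝ) :
    ‖FrFT α f x‖ ^ 2 = (Real.pi * |Real.sin α|)⁻¹ *
      ‖𝓕 (fun t ↦ chirp (Real.cot α) t * f t) (x / (Real.pi * Real.sin α))‖ ^ 2 := by
  rw [frFT_eq_chirp_mul_fourier, mul_assoc, norm_mul, norm_chirp_mul, mul_pow, norm_div, div_pow,
    norm_cpow_half_sq, norm_one_sub_I_mul_cot hα, norm_real, Real.norm_eq_abs, sq_abs,
    Real.sq_sqrt Real.pi_nonneg, mul_inv_rev, div_eq_mul_inv]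

theorem frft_plancherel_general {α : ℝ} (hα : Real.sin α ≠ 0) {f : ℝ → ℂ} (hf₁ : Integrable f)
    (hf₂ : MemLp f 2) : ∫ x, ‖FrFT α f x‖ ^ 2 = ∫ x, ‖f x‖ ^ 2 := by
  set g : ℝ → ℂ := fun t ↦ chirp (Real.cot α) t * f t with hg
  have hg₁ : Integrable g := memLp_one_iff_integrable.1 <|
    memLp_chirp_mul (memLp_one_iff_integrable.2 hf₁) _
  have hjacobian : |Real.pi * Real.sin α| = Real.pi * |Real.sin α| := by
    rw [abs_mul, abs_of_pos Real.pi_pos]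
  calc ∫ x, ‖FrFT α f x‖ ^ 2
      = (Real.pi * |Real.sin α|)⁻¹ * ∫ x, ‖𝓕 g (x / (Real.pi * Real.sin α))‖ ^ 2 := by
        simp_rw [norm_sq_frFT hα, integral_const_mul, hg]
    _ = ∫ ξ, ‖𝓕 g ξ‖ ^ 2 := by
        rw [Measure.integral_comp_div (fun ξ ↦ ‖𝓕 g ξ‖ ^ 2), hjacobian, smul_eq_mul,
          inv_mul_cancel_left₀ (mul_ne_zero Real.pi_ne_zero (abs_ne_zero.2 hα))]
    _ = ∫ t, ‖g t‖ ^ 2 :=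
        integral_norm_sq_fourier_of_integrable_of_memLp_two hg₁ (memLp_chirp_mul hf₂ _)
    _ = ∫ t, ‖f t‖ ^ 2 := by simp_rw [hg, norm_chirp_mul]

end FractionalFourier

section PolynomialGaussian

lemma integrable_pow_mul_cexp_neg_mul_sq {b : ℂ} (hb : 0 < b.re) (n : ℕ) :
    Integrable fun x : ℝ ↦ (x : ℂ) ^ n * Complex.exp (-b * (x : ℂ) ^ 2) := by
  have hreal : Integrable fun x : ℝ ↦ x ^ n * Real.exp (-b.re * x ^ 2) := by
    simpa only [Real.rpow_natCast] using
      integrable_rpow_mul_exp_neg_mul_sq hb (neg_one_lt_zero.trans_le n.cast_nonneg)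
  refine hreal.mono (by fun_prop) (.of_forall fun x ↦ ?_)
  simp [norm_cexp_neg_mul_sq, -neg_mul]

lemma integrable_eval_mul_cexp_neg_mul_sq {b : ℂ} (hb : 0 < b.re) (p : Polynomial ℂ) :
    Integrable fun x : ℝ ↦ p.eval (x : ℂ) * Complex.exp (-b * (x : ℂ) ^ 2) := by
  simp only [Polynomial.eval_eq_sum_range, Finset.sum_mul, mul_assoc]
  exact integrable_finsetSum _ fun n _ ↦ (integrable_pow_mul_cexp_neg_mul_sq hb n).const_mul _

lemma memLp_two_eval_mul_cexp_neg_mul_sq {b : ℂ} (hb : 0 < b.re) (p : Polynomial ℂ) :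
    MemLp (fun x : ℝ ↦ p.eval (x : ℂ) * Complex.exp (-b * (x : ℂ) ^ 2)) 2 := by
  rw [memLp_two_iff_integrable_sq_norm (integrable_eval_mul_cexp_neg_mul_sq hb p).1]
  have hsq (x : ℝ) : (p ^ 2).eval (x : ℂ) * Complex.exp (-(2 * b) * (x : ℂ) ^ 2) =
      (p.eval (x : ℂ) * Complex.exp (-b * (x : ℂ) ^ 2)) ^ 2 := by
    rw [Polynomial.eval_pow, mul_pow, ← Complex.exp_nat_mul]
    congr 2
    push_cast
    ring
  have hb' : 0 < (2 * b).re := by simpa using hb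
  simpa only [← norm_pow, ← hsq] using (integrable_eval_mul_cexp_neg_mul_sq hb' (p ^ 2)).norm

end PolynomialGaussian

/-- Plancherel's formula for the fractional Fourier transform on functions p(x)e^{-x²}. -/
theorem frft_plancherel (α : ℝ) (hα : Real.sin α ≠ 0) (p : Polynomial ℂ) (f : ℝ → ℂ)
    (hf : ∀ x : ℝ, f x = p.eval (x : ℂ) * Complex.exp (-(x:ℂ)^2)) :
    ∫ x : ℝ, ‖FrFT α f x‖^2 = ∫ x : ℝ, ‖f x‖^2 := by
  obtain rfl : f = _ := funext hf
  exact frft_plancherel_general hα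
    (by simpa using integrable_eval_mul_cexp_neg_mul_sq (b := 1) (by simp) p)
    (by simpa using memLp_two_eval_mul_cexp_neg_mul_sq (b := 1) (by simp) p)
end

section
/- For every integer n ≥ 0 and every z ∈ ℂ, the Bargmann transform of the n-th Hermite function is the normalized monomial: (2/π)^{1/4} ∫_ℝ h_n(x) e^{2xz - x² - z²/2} dx = zⁿ/√(n!). -/
open MeasureTheory Complex

/-- The physicists' Hermite polynomial H_n(x) = (-1)ⁿ e^{x²} (dⁿ/dxⁿ) e^{-x²}. -/
noncomputable def physHermite (n : ℕ) (x : ℝ) : ℝ :=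
  (-1)^n * Real.exp (x^2) * deriv^[n] (fun y : ℝ => Real.exp (-y^2)) x

/-- The n-th Hermite function h_n(x) = (2/π)^{1/4} (2ⁿ n!)^{-1/2} e^{-x²} H_n(√2 x). -/
noncomputable def hermiteFun (n : ℕ) (x : ℝ) : ℝ :=
  (2 / Real.pi) ^ ((1:ℝ)/4) * (Real.sqrt (2^n * n.factorial))⁻¹ *
    Real.exp (-x^2) * physHermite n (Real.sqrt 2 * x)

/-!
Write `He n` for the probabilists' Hermite polynomial. Rescaling gives
`H_n(x) = 2 ^ (n / 2) * He n (√2 * x)`, so that `h_n(x)` is a multiple of `e^{-x²} * He n (2 * x)`,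
and the substitution `y = 2 * x` turns the Bargmann transform of `h_n` into a multiple of
`∫ He n (y) e^{-y²/2 + z y - z²/2} dy`. Integration by parts against this Gaussian turns the
recurrence `He (n + 1) = X * He n - derivative (He n)` into multiplication by `z`, so the
integral is `z ^ n` times its value at `n = 0`.
-/

open Polynomial

section PolynomialMulGaussian

theorem exists_norm_eval_le_mul_cosh {R : Type*} [SeminormedRing R] [NormOneClass R] (P : R[X]) :
    ∃ C, ∀ x : R, ‖P.eval x‖ ≤ C * Real.cosh ‖x‖ := by
  induction P using Polynomial.induction_on' with
  | add P Q hP hQ =>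
    obtain ⟨A, hA⟩ := hP
    obtain ⟨B, hB⟩ := hQ
    refine ⟨A + B, fun x => ?_⟩
    rw [eval_add, add_mul]
    exact norm_add_le_of_le (hA x) (hB x)
  | monomial k a =>
    refine ⟨‖a‖ * (2 * k.factorial), fun x => ?_⟩
    have hpow : ‖x‖ ^ k ≤ k.factorial * Real.exp ‖x‖ := by
      rw [← div_le_iff₀' (by positivity)]
      exact Real.pow_div_factorial_le_exp _ (norm_nonneg x) k
    have hexp : Real.exp ‖x‖ ≤ 2 * Real.cosh ‖x‖ := by
      rw [Real.cosh_eq]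
      linarith [Real.exp_pos (-‖x‖)]
    calc ‖(monomial k a).eval x‖ ≤ ‖a‖ * ‖x‖ ^ k := by
          rw [eval_monomial]
          exact norm_mul_le_of_le le_rfl (norm_pow_le x k)
      _ ≤ ‖a‖ * (k.factorial * (2 * Real.cosh ‖x‖)) := by gcongr; exact hpow.trans (by gcongr)
      _ = ‖a‖ * (2 * k.factorial) * Real.cosh ‖x‖ := by ring

theorem integrable_eval_smul_of_integrable_cosh_smul {E : Type*} [NormedAddCommGroup E]
    [NormedSpace ℂ E] {μ : Measure ℝ} {g : ℝ → E}
    (hg : Integrable (fun x : ℝ => Complex.cosh x • g x) μ) (P : ℂ[X]) :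
    Integrable (fun x : ℝ => P.eval (x : ℂ) • g x) μ := by
  obtain ⟨C, hC⟩ := exists_norm_eval_le_mul_cosh P
  have cosh_ne_zero (x : ℝ) : Complex.cosh x ≠ 0 := by
    exact_mod_cast (Real.cosh_pos x).ne'
  have eval_div_cosh_le (x : ℝ) : ‖P.eval (x : ℂ) / Complex.cosh x‖ ≤ C := by
    rw [norm_div, ← ofReal_cosh, norm_real, Real.norm_of_nonneg (Real.cosh_pos x).le,
      div_le_iff₀ (Real.cosh_pos x)]
    simpa only [norm_real, Real.norm_eq_abs, Real.cosh_abs] using hC x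
  have eval_div_cosh_continuous : Continuous fun x : ℝ => P.eval (x : ℂ) / Complex.cosh x :=
    (P.continuous.comp continuous_ofReal).div₀ (by fun_prop) cosh_ne_zero
  refine (hg.bdd_smul C eval_div_cosh_continuous.aestronglyMeasurable
    (.of_forall eval_div_cosh_le)).congr (.of_forall fun x => ?_)
  rw [Pi.smul_apply', smul_smul, div_mul_cancel₀ _ (cosh_ne_zero x)]

variable {b : ℂ}

theorem integrable_eval_mul_cexp_quadratic (hb : b.re < 0) (c d : ℂ) (P : ℂ[X]) :
    Integrable fun x : ℝ => P.eval (x : ℂ) * cexp (b * x ^ 2 + c * x + d) := by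
  refine integrable_eval_smul_of_integrable_cosh_smul ?_ P
  refine (((integrable_cexp_quadratic' hb (c + 1) d).add
    (integrable_cexp_quadratic' hb (c - 1) d)).div_const 2).congr (.of_forall fun x => ?_)
  have hpos : cexp (b * x ^ 2 + (c + 1) * x + d) = cexp x * cexp (b * x ^ 2 + c * x + d) := by
    rw [← Complex.exp_add]; ring_nf
  have hneg : cexp (b * x ^ 2 + (c - 1) * x + d) = cexp (-x) * cexp (b * x ^ 2 + c * x + d) := by
    rw [← Complex.exp_add]; ring_nf
  simp only [Pi.add_apply, hpos, hneg, Complex.cosh, smul_eq_mul]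
  ring

theorem hasDerivAt_eval_mul_cexp_quadratic (b c d : ℂ) (P : ℂ[X]) (x : ℝ) :
    HasDerivAt (fun x : ℝ => P.eval (x : ℂ) * cexp (b * x ^ 2 + c * x + d))
      ((derivative P + (C (2 * b) * X + C c) * P).eval (x : ℂ) *
        cexp (b * x ^ 2 + c * x + d)) x := by
  have hquad : HasDerivAt (fun w : ℂ => b * w ^ 2 + c * w + d) (2 * b * x + c) x := by
    refine ((((hasDerivAt_pow 2 (x : ℂ)).const_mul b).add
      ((hasDerivAt_id (x : ℂ)).const_mul c)).add_const d).congr_deriv ?_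
    push_cast
    ring
  refine ((P.hasDerivAt (x : ℂ)).mul hquad.cexp).comp_ofReal.congr_deriv ?_
  simp only [eval_add, eval_mul, eval_C, eval_X]
  ring

theorem integral_derivative_add_mul_eval_mul_cexp_quadratic (hb : b.re < 0) (c d : ℂ) (P : ℂ[X]) :
    ∫ x : ℝ, (derivative P + (C (2 * b) * X + C c) * P).eval (x : ℂ) *
      cexp (b * x ^ 2 + c * x + d) = 0 :=
  integral_eq_zero_of_hasDerivAt_of_integrable (hasDerivAt_eval_mul_cexp_quadratic b c d P)
    (integrable_eval_mul_cexp_quadratic hb c d _) (integrable_eval_mul_cexp_quadratic hb c d P)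

end PolynomialMulGaussian

section Hermite

theorem integral_cexp_neg_half_sq_add (z : ℂ) :
    ∫ x : ℝ, cexp (-1 / 2 * x ^ 2 + z * x + -z ^ 2 / 2) = √(2 * Real.pi) := by
  rw [integral_cexp_quadratic (by norm_num), Real.sqrt_eq_rpow, ofReal_cpow (by positivity)]
  have hexp : -z ^ 2 / 2 - z ^ 2 / (4 * (-1 / 2)) = 0 := by ring
  have hbase : (Real.pi : ℂ) / -(-1 / 2) = 2 * Real.pi := by ring
  rw [hexp, hbase, Complex.exp_zero, mul_one]
  push_cast
  rfl

theorem integral_aeval_hermite_mul_cexp (n : ℕ) (z : ℂ) :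
    ∫ x : ℝ, aeval (x : ℂ) (hermite n) * cexp (-1 / 2 * x ^ 2 + z * x + -z ^ 2 / 2) =
      z ^ n * √(2 * Real.pi) := by
  have hb : (-1 / 2 : ℂ).re < 0 := by norm_num
  induction n with
  | zero => simpa using integral_cexp_neg_half_sq_add z
  | succ n ih =>
    set P : ℂ[X] := (hermite n).map (algebraMap ℤ ℂ) with hP
    have aeval_succ (x : ℂ) : aeval x (hermite (n + 1)) =
        z * aeval x (hermite n) - (derivative P + (C (2 * (-1 / 2)) * X + C z) * P).eval x := by
      simp only [hP, hermite_succ, derivative_map, eval_add, eval_mul, eval_C, eval_X,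
        eval_map_algebraMap, map_sub, map_mul, aeval_X]
      ring
    have hint : Integrable fun x : ℝ =>
        aeval (x : ℂ) (hermite n) * cexp (-1 / 2 * x ^ 2 + z * x + -z ^ 2 / 2) := by
      simpa only [hP, eval_map_algebraMap] using
        integrable_eval_mul_cexp_quadratic hb z (-z ^ 2 / 2) P
    simp_rw [aeval_succ, sub_mul, mul_assoc z]
    rw [integral_sub (hint.const_mul z) (integrable_eval_mul_cexp_quadratic hb _ _ _),
      integral_derivative_add_mul_eval_mul_cexp_quadratic hb, integral_const_mul, ih]
    ring

theorem physHermite_eq_aeval_hermite (n : ℕ) (x : ℝ) :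
    physHermite n x = √2 ^ n * aeval (√2 * x) (hermite n) := by
  have hsq (y : ℝ) : (√2 * y) ^ 2 / 2 = y ^ 2 := by
    rw [mul_pow, Real.sq_sqrt zero_le_two, mul_div_cancel_left₀ _ two_ne_zero]
  have iterate_deriv_rescale : deriv^[n] (fun y => Real.exp (-y ^ 2)) x =
      √2 ^ n * deriv^[n] (fun y => Real.exp (-(y ^ 2 / 2))) (√2 * x) := by
    have h := congrFun (iteratedDeriv_comp_const_mul (n := n)
      (f := fun y : ℝ => Real.exp (-(y ^ 2 / 2))) (by fun_prop) √2) x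
    simpa only [hsq, iteratedDeriv_eq_iterate] using h
  rw [physHermite, iterate_deriv_rescale, hermite_eq_deriv_gaussian', hsq]
  ring

theorem hermiteFun_eq_aeval_hermite (n : ℕ) (x : ℝ) :
    hermiteFun n x = (2 / Real.pi) ^ ((1 : ℝ) / 4) * (√n.factorial)⁻¹ *
      Real.exp (-x ^ 2) * aeval (2 * x) (hermite n) := by
  have hsqrt : √(2 ^ n * n.factorial) = √2 ^ n * √n.factorial := by
    have hpow : (2 : ℝ) ^ n = (√2 ^ n) ^ 2 := by rw [pow_right_comm, Real.sq_sqrt zero_le_two]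
    rw [hpow, Real.sqrt_mul (by positivity), Real.sqrt_sq (by positivity)]
  rw [hermiteFun, physHermite_eq_aeval_hermite, hsqrt, ← mul_assoc √2,
    Real.mul_self_sqrt zero_le_two]
  field_simp

end Hermite

section Bargmann

theorem hermiteFun_mul_bargmann_kernel (n : ℕ) (z : ℂ) (x : ℝ) :
    (hermiteFun n x : ℂ) * cexp (2 * x * z - (x : ℂ) ^ 2 - z ^ 2 / 2) =
      ((2 / Real.pi) ^ ((1 : ℝ) / 4) * (√n.factorial)⁻¹ : ℝ) *
        (aeval ((2 * x : ℝ) : ℂ) (hermite n) *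
          cexp (-1 / 2 * (2 * x : ℝ) ^ 2 + z * (2 * x : ℝ) + -z ^ 2 / 2)) := by
  have hexp : cexp (-1 / 2 * (2 * x : ℝ) ^ 2 + z * (2 * x : ℝ) + -z ^ 2 / 2) =
      cexp (-(x : ℂ) ^ 2) * cexp (2 * x * z - (x : ℂ) ^ 2 - z ^ 2 / 2) := by
    rw [← Complex.exp_add]
    push_cast
    ring_nf
  have haeval : aeval ((2 * x : ℝ) : ℂ) (hermite n) = (aeval (2 * x) (hermite n) : ℝ) :=
    aeval_algebraMap_apply ℂ (2 * x) (hermite n)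
  rw [hermiteFun_eq_aeval_hermite, hexp, haeval]
  push_cast
  ring

theorem integral_hermiteFun_mul_bargmann_kernel (n : ℕ) (z : ℂ) :
    ∫ x : ℝ, (hermiteFun n x : ℂ) * cexp (2 * x * z - (x : ℂ) ^ 2 - z ^ 2 / 2) =
      ((2 / Real.pi) ^ ((1 : ℝ) / 4) * (√n.factorial)⁻¹ * (√(2 * Real.pi) / 2) : ℝ) * z ^ n := by
  simp_rw [hermiteFun_mul_bargmann_kernel]
  rw [integral_const_mul, Measure.integral_comp_mul_left (fun y : ℝ =>
    aeval (y : ℂ) (hermite n) * cexp (-1 / 2 * (y : ℂ) ^ 2 + z * y + -z ^ 2 / 2)),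
    integral_aeval_hermite_mul_cexp, abs_of_pos (by positivity), real_smul]
  push_cast
  ring

theorem two_div_pi_rpow_quarter_mul_self :
    (2 / Real.pi) ^ ((1 : ℝ) / 4) * (2 / Real.pi) ^ ((1 : ℝ) / 4) = 2 / √(2 * Real.pi) := by
  have hsqrt : √(2 / Real.pi) * √(2 * Real.pi) = 2 := by
    rw [← Real.sqrt_mul (by positivity), Real.sqrt_eq_iff_mul_self_eq_of_pos two_pos]
    field_simp
  rw [← Real.rpow_add (by positivity), show (1 : ℝ) / 4 + 1 / 4 = 1 / 2 by norm_num,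
    ← Real.sqrt_eq_rpow]
  exact eq_div_of_mul_eq (by positivity) hsqrt

end Bargmann

/-- The Bargmann transform sends the n-th Hermite function to zⁿ/√(n!). -/
theorem bargmann_hermite (n : ℕ) (z : ℂ) :
    Bargmann (fun x => ((hermiteFun n x : ℝ) : ℂ)) z =
      z ^ n / ((Real.sqrt n.factorial : ℝ) : ℂ) := by
  set a : ℝ := (2 / Real.pi) ^ ((1 : ℝ) / 4) with ha
  have constants_cancel : a * (a * (√n.factorial)⁻¹ * (√(2 * Real.pi) / 2)) = (√n.factorial)⁻¹ := by
    calc a * (a * (√n.factorial)⁻¹ * (√(2 * Real.pi) / 2))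
        = a * a * (√(2 * Real.pi) / 2) * (√n.factorial)⁻¹ := by ring
      _ = (√n.factorial)⁻¹ := by
        rw [ha, two_div_pi_rpow_quarter_mul_self, div_mul_div_cancel₀ (by positivity),
          div_self two_ne_zero, one_mul]
  rw [Bargmann, integral_hermiteFun_mul_bargmann_kernel, ← ha, ← mul_assoc, ← ofReal_mul,
    constants_cancel, ofReal_inv, mul_comm, ← div_eq_mul_inv]
end

section
/- Let α ∈ ℝ with sin α ≠ 0 and let f : ℂ → ℂ be a polynomial function. Then for every x ∈ ℝ, F_α(B⁻¹f)(x) = (2/π)^{1/4} e^{-x²} ∫_ℂ f(w) e^{-e^{-2iα} w̄²/2 + 2 e^{-iα} x w̄} dλ(w). -/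
open MeasureTheory Complex

/-!
The inverse Bargmann transform superposes the functions `k_z(t) = e^{2tz - t² - z²/2}` with
`z = w̄`. Each `F_α k_z` is a Gaussian integral, and since `(1 - i cot α)⁻¹ = i sin α e^{-iα}`,
completing the square shows that `F_α` only rotates the parameter: `F_α k_z = k_{e^{-iα} z}`.
It remains to move `F_α` under the integral over `w`. The modulus of `k_{w̄}(t) e^{-|w|²}` is
`e^{-|w|²/2} e^{-(t - Re w)²}`, so after the shear `(w, t) ↦ (w, t - Re w)` Fubini's theorem applies
as soon as `f(w) e^{-|w|²/2}` is integrable.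
-/

/-- The kernel `e^{2tz - t² - z²/2}` of the inverse Bargmann transform at `z ∈ ℂ`, `t ∈ ℝ`; the
transform integrates it, without the constant `(2/π)^{1/4}`, at the conjugate of the integration
variable. -/
noncomputable def bargmannKernel (z : ℂ) (t : ℝ) : ℂ :=
  exp (2 * t * z - (t : ℂ) ^ 2 - z ^ 2 / 2)

lemma gaussInt_const_mul (c : ℂ) (F : ℂ → ℂ) :
    gaussInt (fun w ↦ c * F w) = c * gaussInt F := by
  simp only [gaussInt, mul_assoc, integral_const_mul]
  ring

lemma frFT_const_mul (α : ℝ) (c : ℂ) (g : ℝ → ℂ) (x : ℝ) :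
    FrFT α (fun t ↦ c * g t) x = c * FrFT α g x := by
  simp only [FrFT, mul_left_comm _ c, integral_const_mul]

lemma norm_exp_chirp (x s c t : ℝ) :
    ‖exp (-2 * I * ((x : ℂ) * t * (s : ℂ) - ((c : ℂ) / 2) * (t : ℂ) ^ 2))‖ = 1 := by
  rw [← norm_exp_ofReal_mul_I (-2 * (x * t * s - c / 2 * t ^ 2))]
  congr 2
  push_cast
  ring

lemma frFT_integral {X : Type*} [MeasurableSpace X] {μ : Measure X} [SFinite μ] {k : X → ℝ → ℂ}
    (hk : Integrable (Function.uncurry k) (μ.prod volume)) (α x : ℝ) :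
    FrFT α (fun t ↦ ∫ w, k w t ∂μ) x = ∫ w, FrFT α (k w) x ∂μ := by
  have chirp_mul_integrable := hk.bdd_mul
    (f := fun p : X × ℝ ↦ exp (-2 * I * ((x : ℂ) * p.2 * (((Real.sin α)⁻¹ : ℝ) : ℂ)
      - ((Real.cot α : ℂ) / 2) * (p.2 : ℂ) ^ 2)))
    (Measurable.aestronglyMeasurable (by fun_prop))
    (Filter.Eventually.of_forall fun p ↦ (norm_exp_chirp x _ _ p.2).le)
  simp only [FrFT, ← integral_const_mul]
  exact (integral_integral_swap (chirp_mul_integrable.const_mul _)).symm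

lemma frFT_gaussInt {F : ℂ → ℝ → ℂ}
    (hF : Integrable fun p : ℂ × ℝ ↦ F p.1 p.2 * exp (-(‖p.1‖ : ℂ) ^ 2)) (α x : ℝ) :
    FrFT α (fun t ↦ gaussInt fun w ↦ F w t) x = gaussInt fun w ↦ FrFT α (F w) x := by
  simp only [gaussInt, frFT_const_mul]
  rw [frFT_integral (k := fun w t ↦ F w t * exp (-(‖w‖ : ℂ) ^ 2)) hF]
  simp only [mul_comm _ (exp _), frFT_const_mul]

lemma ofReal_div_cpow {a : ℝ} (ha : 0 < a) {b : ℂ} (hb : b ≠ 0) (hb_arg : b.arg ≠ Real.pi)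
    (r : ℂ) : ((a : ℂ) / b) ^ r = (a : ℂ) ^ r / b ^ r := by
  have ha' : (a : ℂ) ≠ 0 := ofReal_ne_zero.mpr ha.ne'
  have hb' : b⁻¹ ≠ 0 := inv_ne_zero hb
  rw [div_eq_mul_inv, div_eq_mul_inv, ← inv_cpow b r hb_arg,
    cpow_def_of_ne_zero (mul_ne_zero ha' hb'), cpow_def_of_ne_zero ha', cpow_def_of_ne_zero hb',
    log_ofReal_mul ha hb', ofReal_log ha.le, add_mul, exp_add]

lemma exp_neg_I_mul (a : ℂ) : exp (-(I * a)) = cos a - I * sin a := by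
  rw [mul_comm I, mul_comm I, cos_sub_sin_I, neg_mul]

lemma inv_one_sub_I_mul_cot {a : ℂ} (ha : sin a ≠ 0) :
    (1 - I * cot a)⁻¹ = I * sin a * exp (-(I * a)) := by
  apply inv_eq_of_mul_eq_one_right
  rw [exp_neg_I_mul, cot]
  field_simp
  linear_combination sin_sq_add_cos_sq a -
    (sin a ^ 2 + cos a ^ 2 - I * sin a * cos a) * I_sq

lemma chirp_add_completed_square_eq {a : ℂ} (ha : sin a ≠ 0) (x z : ℂ) :
    I * x ^ 2 * cot a + (-z ^ 2 / 2 + (z - I * x * (sin a)⁻¹) ^ 2 * (1 - I * cot a)⁻¹) =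
      2 * x * (exp (-(I * a)) * z) - x ^ 2 - (exp (-(I * a)) * z) ^ 2 / 2 := by
  rw [inv_one_sub_I_mul_cot ha, cot, div_eq_mul_inv]
  have sin_mul_inv : sin a * (sin a)⁻¹ = 1 := mul_inv_cancel₀ ha
  have coeff_z_sq : I * sin a * exp (-(I * a)) - 1 / 2 = -exp (-(I * a)) ^ 2 / 2 := by
    rw [exp_neg_I_mul]
    linear_combination sin_sq_add_cos_sq a / 2 - sin a ^ 2 / 2 * I_sq
  have coeff_x_sq : I * (cos a * (sin a)⁻¹) - I * exp (-(I * a)) * (sin a)⁻¹ = -1 := by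
    rw [exp_neg_I_mul]
    linear_combination I ^ 2 * sin_mul_inv + I_sq
  linear_combination z ^ 2 * coeff_z_sq + x ^ 2 * coeff_x_sq
    - 2 * x * z * exp (-(I * a)) * (I ^ 2 * sin_mul_inv + I_sq)
    + x ^ 2 * I * (sin a)⁻¹ * exp (-(I * a)) * (I ^ 2 * sin_mul_inv + I_sq)

lemma integral_chirp_mul_bargmannKernel {c : ℂ} (hc : 0 < (1 - I * c).re) (x s z : ℂ) :
    ∫ t : ℝ, exp (-2 * I * (x * t * s - c / 2 * (t : ℂ) ^ 2)) * bargmannKernel z t =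
      (Real.pi / (1 - I * c)) ^ ((1 : ℂ) / 2) *
        exp (-z ^ 2 / 2 + (z - I * x * s) ^ 2 * (1 - I * c)⁻¹) := by
  have denom_ne_zero : 1 - I * c ≠ 0 := fun h ↦ by simp [h] at hc
  convert integral_cexp_quadratic (b := -(1 - I * c)) (by rwa [neg_re, neg_lt_zero])
    (2 * (z - I * x * s)) (-z ^ 2 / 2) using 2
  · funext t
    rw [bargmannKernel, ← exp_add]
    ring_nf
  · rw [neg_neg]
  · congr 1
    field_simp
    ring

lemma cpow_half_div_sqrt_pi_mul_cpow_half {β : ℂ} (hβ : 0 < β.re) :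
    β ^ ((1 : ℂ) / 2) / (Real.sqrt Real.pi : ℂ) * (Real.pi / β) ^ ((1 : ℂ) / 2) = 1 := by
  have hβ_ne : β ≠ 0 := fun h ↦ by simp [h] at hβ
  have hβ_arg : β.arg ≠ Real.pi := fun h ↦ by linarith [(arg_eq_pi_iff.mp h).1]
  have cast_sqrt_pi : (Real.sqrt Real.pi : ℂ) = (Real.pi : ℂ) ^ ((1 : ℂ) / 2) := by
    rw [Real.sqrt_eq_rpow, ofReal_cpow Real.pi_pos.le]
    norm_num
  have cpow_half_ne_zero {w : ℂ} (hw : w ≠ 0) : w ^ ((1 : ℂ) / 2) ≠ 0 :=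
    (cpow_ne_zero_iff_of_exponent_ne_zero (by norm_num)).mpr hw
  rw [ofReal_div_cpow Real.pi_pos hβ_ne hβ_arg, cast_sqrt_pi,
    div_mul_div_cancel₀ (cpow_half_ne_zero (ofReal_ne_zero.mpr Real.pi_ne_zero)),
    div_self (cpow_half_ne_zero hβ_ne)]

lemma frFT_bargmannKernel {α : ℝ} (hα : Real.sin α ≠ 0) (z : ℂ) (x : ℝ) :
    FrFT α (bargmannKernel z) x = bargmannKernel (exp (-(I * α)) * z) x := by
  have sin_ne_zero : sin (α : ℂ) ≠ 0 := by exact_mod_cast hα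
  have re_pos : 0 < (1 - I * (Real.cot α : ℂ)).re := by simp [-ofReal_cot]
  calc FrFT α (bargmannKernel z) x
      = ((1 - I * (Real.cot α : ℂ)) ^ ((1 : ℂ) / 2) / (Real.sqrt Real.pi : ℂ) *
          (Real.pi / (1 - I * (Real.cot α : ℂ))) ^ ((1 : ℂ) / 2)) *
        (exp (I * (x : ℂ) ^ 2 * Real.cot α) * exp (-z ^ 2 / 2 +
          (z - I * x * ((Real.sin α)⁻¹ : ℝ)) ^ 2 * (1 - I * (Real.cot α : ℂ))⁻¹)) := by
        rw [FrFT, integral_chirp_mul_bargmannKernel re_pos]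
        ring
    _ = bargmannKernel (exp (-(I * α)) * z) x := by
        rw [cpow_half_div_sqrt_pi_mul_cpow_half re_pos, one_mul, ← exp_add, ofReal_cot, ofReal_inv,
          ofReal_sin, chirp_add_completed_square_eq sin_ne_zero, bargmannKernel]

lemma integrable_prod_mul_comp_sub {X G R : Type*} [MeasurableSpace X] [AddGroup G]
    [MeasurableSpace G] [MeasurableAdd G] [MeasurableSub₂ G] [NormedRing R] {μ : Measure X}
    [SFinite μ] {ν : Measure G} [SFinite ν] [ν.IsAddRightInvariant] {g : X → R}
    (hg : Integrable g μ) {h : G → R} (hh : Integrable h ν) {u : X → G} (hu : Measurable u) :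
    Integrable (fun p : X × G ↦ g p.1 * h (p.2 - u p.1)) (μ.prod ν) := by
  have shear : MeasurePreserving (fun p : X × G ↦ (p.1, p.2 - u p.1)) (μ.prod ν) (μ.prod ν) :=
    (MeasurePreserving.id μ).skew_product (g := fun w t ↦ t - u w) (by fun_prop)
      (Filter.Eventually.of_forall fun w ↦ (measurePreserving_sub_right ν (u w)).map_eq)
  exact shear.integrable_comp_of_integrable (hg.mul_prod hh)

lemma bargmannKernel_conj_mul_gaussian (w : ℂ) (t : ℝ) :
    bargmannKernel (starRingEnd ℂ w) t * exp (-(‖w‖ : ℂ) ^ 2) =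
      exp ((w.im * (w.re - 2 * t) : ℝ) * I) *
        (exp (-(1 / 2) * (‖w‖ : ℂ) ^ 2) * exp (-((t - w.re : ℝ) : ℂ) ^ 2)) := by
  have norm_sq : (‖w‖ : ℂ) ^ 2 = (w.re : ℂ) ^ 2 + (w.im : ℂ) ^ 2 := by
    rw [← ofReal_pow, Complex.sq_norm, normSq_apply]
    push_cast
    ring
  have conj_eq : starRingEnd ℂ w = w.re - w.im * I := by
    apply Complex.ext <;> simp
  rw [bargmannKernel, ← exp_add, ← exp_add, ← exp_add, norm_sq, conj_eq]
  congr 1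
  push_cast
  linear_combination -(w.im : ℂ) ^ 2 / 2 * I_sq

lemma integrable_mul_bargmannKernel_mul_gaussian {f : ℂ → ℂ}
    (hf : Integrable fun w ↦ f w * exp (-(1 / 2) * (‖w‖ : ℂ) ^ 2)) :
    Integrable fun p : ℂ × ℝ ↦
      f p.1 * bargmannKernel (starRingEnd ℂ p.1) p.2 * exp (-(‖p.1‖ : ℂ) ^ 2) := by
  have gaussian_integrable : Integrable fun t : ℝ ↦ exp (-(t : ℂ) ^ 2) := by
    simpa using integrable_cexp_neg_mul_sq (b := 1) (by simp)
  have sheared_integrable := integrable_prod_mul_comp_sub hf gaussian_integrable measurable_re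
  refine (sheared_integrable.bdd_mul
    (f := fun p : ℂ × ℝ ↦ exp ((p.1.im * (p.1.re - 2 * p.2) : ℝ) * I))
    (Measurable.aestronglyMeasurable (by fun_prop))
    (Filter.Eventually.of_forall fun p ↦ (norm_exp_ofReal_mul_I _).le)).congr
    (Filter.Eventually.of_forall fun p ↦ ?_)
  simp only [mul_assoc, bargmannKernel_conj_mul_gaussian]
  ring

lemma integrable_norm_pow_mul_exp_neg_mul_norm_sq {E : Type*} [NormedAddCommGroup E]
    [NormedSpace ℝ E] [FiniteDimensional ℝ E] [Nontrivial E] [MeasurableSpace E] [BorelSpace E]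
    (μ : Measure E) [μ.IsAddHaarMeasure] (n : ℕ) {b : ℝ} (hb : 0 < b) :
    Integrable (fun v ↦ ‖v‖ ^ n * Real.exp (-b * ‖v‖ ^ 2)) μ := by
  rw [integrable_fun_norm_addHaar μ (f := fun r ↦ r ^ n * Real.exp (-b * r ^ 2))]
  have radial_integrable := integrable_rpow_mul_exp_neg_mul_sq hb
    (neg_one_lt_zero.trans_le (Nat.cast_nonneg (Module.finrank ℝ E - 1 + n)))
  simpa only [Real.rpow_natCast, pow_add, mul_assoc, smul_eq_mul] using
    radial_integrable.integrableOn

lemma integrable_polynomial_mul_gaussian (p : Polynomial ℂ) {b : ℂ} (hb : 0 < b.re) :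
    Integrable fun w : ℂ ↦ p.eval w * exp (-b * (‖w‖ : ℂ) ^ 2) := by
  simp only [Polynomial.eval_eq_sum_range, Finset.sum_mul, mul_assoc]
  refine integrable_finsetSum _ fun n _ ↦ Integrable.const_mul ?_ _
  refine (integrable_norm_pow_mul_exp_neg_mul_norm_sq volume n hb).mono'
    (by fun_prop) (Filter.Eventually.of_forall fun w ↦ le_of_eq ?_)
  rw [norm_mul, norm_pow, norm_exp, ← ofReal_pow, re_mul_ofReal, neg_re]

theorem frft_bargmann_inv_general (α : ℝ) (hα : Real.sin α ≠ 0) (f : ℂ → ℂ)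
    (hf : Integrable fun w ↦ f w * exp (-(1 / 2) * (‖w‖ : ℂ) ^ 2)) (x : ℝ) :
    FrFT α (BargmannInv f) x =
      (((2 / Real.pi) ^ ((1 : ℝ) / 4) : ℝ) : ℂ) * exp (-(x : ℂ) ^ 2) *
        gaussInt (fun w ↦ f w *
          exp (-exp (-(2 * I * α)) * (starRingEnd ℂ w) ^ 2 / 2
            + 2 * exp (-(I * α)) * (x : ℂ) * starRingEnd ℂ w)) := by
  have exp_two : exp (-(2 * I * α)) = exp (-(I * α)) ^ 2 := by
    rw [← exp_nat_mul]
    ring_nf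
  have rotated_kernel (w : ℂ) : bargmannKernel (exp (-(I * α)) * w) x =
      exp (-(x : ℂ) ^ 2) *
        exp (-exp (-(2 * I * α)) * w ^ 2 / 2 + 2 * exp (-(I * α)) * (x : ℂ) * w) := by
    rw [bargmannKernel, ← exp_add, exp_two]
    ring_nf
  set C : ℂ := (((2 / Real.pi) ^ ((1 : ℝ) / 4) : ℝ) : ℂ)
  calc FrFT α (BargmannInv f) x
      = C * FrFT α (fun t ↦ gaussInt fun w ↦ f w * bargmannKernel (starRingEnd ℂ w) t) x :=
        frFT_const_mul α C _ x
    _ = C * gaussInt fun w ↦ f w * bargmannKernel (exp (-(I * α)) * starRingEnd ℂ w) x := by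
        rw [frFT_gaussInt (integrable_mul_bargmannKernel_mul_gaussian hf)]
        simp only [frFT_const_mul, frFT_bargmannKernel hα]
    _ = _ := by
        simp only [rotated_kernel, mul_left_comm (f _), gaussInt_const_mul, mul_assoc]

/-- F_α(B⁻¹f)(x) = (2/π)^{1/4} e^{-x²} ∫ f(w) e^{-e^{-2iα}w̄²/2 + 2e^{-iα}xw̄} dλ(w)
for polynomial f. -/
theorem frft_bargmann_inv (α : ℝ) (hα : Real.sin α ≠ 0) (p : Polynomial ℂ) (f : ℂ → ℂ)
    (hf : ∀ z, f z = p.eval z) (x : ℝ) :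
    FrFT α (BargmannInv f) x =
      (((2 / Real.pi) ^ ((1:ℝ)/4) : ℝ) : ℂ) * Complex.exp (-(x:ℂ)^2) *
        gaussInt (fun w => f w *
          Complex.exp (-Complex.exp (-(2 * Complex.I * α)) * (starRingEnd ℂ w)^2 / 2
            + 2 * Complex.exp (-(Complex.I * α)) * (x : ℂ) * starRingEnd ℂ w)) := by
  have integrable_f := integrable_polynomial_mul_gaussian p (b := 1 / 2) (by norm_num)
  exact frft_bargmann_inv_general α hα f (by simpa only [hf] using integrable_f) x
end

section
/- Let α ∈ ℝ, let φ be an entire function with ∫_ℂ |φ(z)|² dλ(z) < ∞, and let f : ℂ → ℂ be a polynomial function. Define S^α_φ f(z) = ∫_ℂ f(w) e^{z w̄} φ(e^{iα} z - e^{-iα} w̄) dλ(w) and U_α f(z) = f(e^{-iα} z). Then for every z ∈ ℂ, S^α_φ f(z) = S_φ(U_α f)(e^{iα} z); that is, S^α_φ = U_{-α} S_φ U_α, so S^α_φ and S_φ are unitarily equivalent. -/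
open MeasureTheory Complex

/-- The singular integral operator S_φ f(z) = ∫_ℂ f(w) e^{zw̄} φ(z - w̄) dλ(w). -/
noncomputable def Sphi (φ : ℂ → ℂ) (f : ℂ → ℂ) (z : ℂ) : ℂ :=
  gaussInt (fun w => f w * Complex.exp (z * starRingEnd ℂ w) * φ (z - starRingEnd ℂ w))

theorem gaussInt_comp_linearIsometryEquiv (e : ℂ ≃ₗᵢ[ℝ] ℂ) (F : ℂ → ℂ) :
    gaussInt (fun w => F (e w)) = gaussInt F := by
  simpa only [gaussInt, e.norm_map] using
    congrArg ((Real.pi : ℂ)⁻¹ * ·) (e.measurePreserving.integral_comp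
      e.toHomeomorph.measurableEmbedding fun w => F w * Complex.exp (-(‖w‖ : ℂ) ^ 2))

theorem gaussInt_comp_circle_mul (c : Circle) (F : ℂ → ℂ) :
    gaussInt (fun w => F (c * w)) = gaussInt F :=
  gaussInt_comp_linearIsometryEquiv (rotation c) F

theorem sphi_alpha_unitary_equiv_general (c : Circle) (φ f : ℂ → ℂ) (z : ℂ) :
    gaussInt (fun w => f w * Complex.exp (z * starRingEnd ℂ w) *
        φ (c * z - (c⁻¹ : Circle) * starRingEnd ℂ w)) =
      Sphi φ (fun w => f ((c⁻¹ : Circle) * w)) (c * z) := by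
  have inv_mul_mul (w : ℂ) : ((c⁻¹ : Circle) : ℂ) * (c * w) = w := by
    rw [Circle.coe_inv, inv_mul_cancel_left₀ c.coe_ne_zero]
  have conj_mul (w : ℂ) : starRingEnd ℂ (c * w) = (c⁻¹ : Circle) * starRingEnd ℂ w := by
    rw [map_mul, Circle.coe_inv_eq_conj]
  have mul_mul_conj_mul (w : ℂ) : c * z * starRingEnd ℂ (c * w) = z * starRingEnd ℂ w := by
    rw [conj_mul, mul_mul_mul_comm, Circle.coe_inv, mul_inv_cancel₀ c.coe_ne_zero, one_mul]
  calc
    gaussInt (fun w => f w * Complex.exp (z * starRingEnd ℂ w) *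
        φ (c * z - (c⁻¹ : Circle) * starRingEnd ℂ w))
      = gaussInt (fun w => f ((c⁻¹ : Circle) * (c * w)) *
          Complex.exp (c * z * starRingEnd ℂ (c * w)) * φ (c * z - starRingEnd ℂ (c * w))) := by
        simp_rw [inv_mul_mul, mul_mul_conj_mul, conj_mul]
    _ = Sphi φ (fun w => f ((c⁻¹ : Circle) * w)) (c * z) :=
        gaussInt_comp_circle_mul c fun w => f ((c⁻¹ : Circle) * w) *
          Complex.exp (c * z * starRingEnd ℂ w) * φ (c * z - starRingEnd ℂ w)

/-- S^α_φ = U_{-α} S_φ U_α: for every z, S^α_φ f(z) = S_φ(U_α f)(e^{iα}z), where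
U_α f(z) = f(e^{-iα}z). Hence S^α_φ and S_φ are unitarily equivalent. -/
theorem sphi_alpha_unitary_equiv (α : ℝ) (φ : ℂ → ℂ) (hφ : Differentiable ℂ φ)
    (hφ2 : Integrable (fun z : ℂ => ‖φ z‖^2 * Real.exp (-‖z‖^2)))
    (p : Polynomial ℂ) (f : ℂ → ℂ) (hf : ∀ z, f z = p.eval z) (z : ℂ) :
    gaussInt (fun w => f w * Complex.exp (z * starRingEnd ℂ w) *
        φ (Complex.exp (Complex.I * α) * z - Complex.exp (-(Complex.I * α)) * starRingEnd ℂ w)) =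
      Sphi φ (fun w => f (Complex.exp (-(Complex.I * α)) * w)) (Complex.exp (Complex.I * α) * z) := by
  simpa only [← Circle.exp_neg, Circle.coe_exp, ofReal_neg, mul_comm _ I, mul_neg] using
    sphi_alpha_unitary_equiv_general (Circle.exp α) φ f z
end

section
/- Let s ∈ ℝ with s ≠ 0 and n ≥ 0 an integer, and define φ_n(z) = √(|s|/π) ∫_ℝ tⁿ e^{-((s²+2)/2) t² - t s z} dt. Then there exist complex numbers a_0, a_1, …, a_n with a_n = √(2|s|/(s²+2)) · (-1)ⁿ sⁿ / (s²+2)ⁿ (in particular a_n ≠ 0) such that for all z ∈ ℂ, φ_n(z) = (a_n zⁿ + ⋯ + a_1 z + a_0) e^{s² z²/(2(s²+2))}. -/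
open MeasureTheory Complex

/-!
The integral defining `φₙ` is a multiple of `∫ tⁿ exp (w t) dγ(t)`, where `γ` is the centred
Gaussian measure of variance `v = 1 / (s² + 2)` and `w = -s z`. This is the `n`-th derivative in `w`
of the moment generating function `exp (v w² / 2)` of `γ`. Each differentiation of
`p(w) exp (v w² / 2)` replaces the polynomial `p` by `p' + v w p`, which raises the degree by one
and multiplies the leading coefficient by `v`.
-/

section ExpDerivPoly

open Polynomial

variable {R : Type*} [Semiring R]

/-- The polynomial factor `p` in `(exp ∘ q)⁽ⁿ⁾ = p · (exp ∘ q)`, i.e. the complete Bell polynomial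
in the derivatives of `q`, defined by its recursion so that it makes sense over any semiring. -/
noncomputable def expDerivPoly (q : R[X]) : ℕ → R[X]
  | 0 => 1
  | n + 1 => derivative (expDerivPoly q n) + derivative q * expDerivPoly q n

theorem natDegree_expDerivPoly_le {q : R[X]} {d : ℕ}
    (hq : (derivative q).natDegree ≤ d) (n : ℕ) : (expDerivPoly q n).natDegree ≤ n * d := by
  induction n with
  | zero => simp [expDerivPoly]
  | succ n ih =>
    refine natDegree_add_le_of_degree_le ?_ ?_
    · calc (derivative (expDerivPoly q n)).natDegree
        _ ≤ (expDerivPoly q n).natDegree - 1 := natDegree_derivative_le _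
        _ ≤ (n + 1) * d := by grind
    · calc (derivative q * expDerivPoly q n).natDegree
        _ ≤ d + n * d := natDegree_mul_le_of_le hq ih
        _ = (n + 1) * d := by ring

theorem coeff_expDerivPoly {q : R[X]} {d : ℕ} (hq : (derivative q).natDegree ≤ d) (n : ℕ) :
    (expDerivPoly q n).coeff (n * d) = (derivative q).coeff d ^ n := by
  induction n with
  | zero => simp [expDerivPoly]
  | succ n ih =>
    have hdeg := natDegree_expDerivPoly_le hq n
    have hderiv : (derivative (expDerivPoly q n)).coeff ((n + 1) * d) = 0 := by
      rw [coeff_derivative, coeff_eq_zero_of_natDegree_lt (by grind), zero_mul]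
    rw [expDerivPoly, coeff_add, hderiv, zero_add, add_one_mul, add_comm (n * d),
      coeff_mul_add_eq_of_natDegree_le hq hdeg, ih, pow_succ']

theorem iteratedDeriv_cexp_eval (q : ℂ[X]) (n : ℕ) :
    iteratedDeriv n (fun z ↦ cexp (q.eval z)) =
      fun z ↦ (expDerivPoly q n).eval z * cexp (q.eval z) := by
  induction n with
  | zero => simp [expDerivPoly]
  | succ n ih =>
    ext z
    rw [iteratedDeriv_succ, ih,
      (((expDerivPoly q n).hasDerivAt z).fun_mul (q.hasDerivAt z).cexp).deriv]
    simp only [expDerivPoly, eval_add, eval_mul]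
    ring

end ExpDerivPoly

section Gaussian

open Polynomial ProbabilityTheory
open scoped NNReal

/-- The cumulant generating function of the Gaussian measure of mean `m` and variance `v`, as a
polynomial with complex coefficients, so that its exponential is the moment generating function. -/
noncomputable def gaussianCumulantPoly (m v : ℝ) : ℂ[X] := C (m : ℂ) * X + C (v / 2 : ℂ) * X ^ 2

theorem eval_gaussianCumulantPoly (m v : ℝ) (w : ℂ) :
    (gaussianCumulantPoly m v).eval w = m * w + v / 2 * w ^ 2 := by
  simp [gaussianCumulantPoly]

theorem derivative_gaussianCumulantPoly (m v : ℝ) :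
    derivative (gaussianCumulantPoly m v) = C (v : ℂ) * X + C (m : ℂ) := by
  simp only [gaussianCumulantPoly, derivative_add, derivative_C_mul, derivative_X, derivative_X_sq]
  rw [← mul_assoc, ← C_mul, div_mul_cancel₀ _ two_ne_zero, mul_one, add_comm]

theorem natDegree_derivative_gaussianCumulantPoly_le (m v : ℝ) :
    (derivative (gaussianCumulantPoly m v)).natDegree ≤ 1 := by
  rw [derivative_gaussianCumulantPoly]
  exact natDegree_linear_le

theorem complexMGF_id_gaussianReal_eq_cexp_eval (m : ℝ) (v : ℝ≥0) :
    complexMGF id (gaussianReal m v) = fun w ↦ cexp ((gaussianCumulantPoly m v).eval w) := by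
  ext w
  rw [complexMGF_id_gaussianReal, eval_gaussianCumulantPoly]
  ring_nf

theorem integral_pow_mul_cexp_gaussianReal (m : ℝ) (v : ℝ≥0) (n : ℕ) (w : ℂ) :
    ∫ x : ℝ, (x : ℂ) ^ n * cexp (w * x) ∂gaussianReal m v =
      (expDerivPoly (gaussianCumulantPoly m v) n).eval w *
        cexp ((gaussianCumulantPoly m v).eval w) := by
  have hderiv : iteratedDeriv n (complexMGF id (gaussianReal m v)) w =
      ∫ x : ℝ, (x : ℂ) ^ n * cexp (w * x) ∂gaussianReal m v :=
    iteratedDeriv_complexMGF (by simp) n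
  rw [← hderiv, complexMGF_id_gaussianReal_eq_cexp_eval, iteratedDeriv_cexp_eval]

theorem integral_exp_neg_sq_smul {E : Type*} [NormedAddCommGroup E] [NormedSpace ℝ E]
    (m : ℝ) {v : ℝ≥0} (hv : v ≠ 0) (f : ℝ → E) :
    ∫ x, Real.exp (-(x - m) ^ 2 / (2 * v)) • f x =
      √(2 * Real.pi * v) • ∫ x, f x ∂gaussianReal m v := by
  have hsqrt : √(2 * Real.pi * v) ≠ 0 := by positivity
  simp only [integral_gaussianReal_eq_integral_smul hv, gaussianPDFReal, mul_smul, integral_smul,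
    smul_inv_smul₀ hsqrt]

theorem integral_pow_mul_cexp_neg_sq_add_mul (m : ℝ) {v : ℝ} (hv : 0 < v) (n : ℕ) (w : ℂ) :
    ∫ t : ℝ, (t : ℂ) ^ n * cexp (-(t - m) ^ 2 / (2 * v) + w * t) =
      √(2 * Real.pi * v) * ((expDerivPoly (gaussianCumulantPoly m v) n).eval w *
        cexp ((gaussianCumulantPoly m v).eval w)) := by
  lift v to ℝ≥0 using hv.le
  have hv0 : v ≠ 0 := by exact_mod_cast hv.ne'
  have hintegrand (t : ℝ) : (t : ℂ) ^ n * cexp (-(t - m) ^ 2 / (2 * (v : ℝ)) + w * t) =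
      Real.exp (-(t - m) ^ 2 / (2 * v)) • ((t : ℂ) ^ n * cexp (w * t)) := by
    rw [Complex.exp_add, Complex.real_smul]
    push_cast
    ring
  simp only [hintegrand]
  rw [integral_exp_neg_sq_smul m hv0, integral_pow_mul_cexp_gaussianReal, Complex.real_smul]

theorem exists_polynomial_integral_pow_mul_cexp {α : ℝ} (hα : 0 < α) (c : ℂ) (n : ℕ) :
    ∃ p : ℂ[X], p.natDegree ≤ n ∧ p.coeff n = (-c / α) ^ n ∧ ∀ z : ℂ,
      ∫ t : ℝ, (t : ℂ) ^ n * cexp (-(α / 2) * t ^ 2 - t * c * z) =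
        √(2 * Real.pi / α) * (p.eval z * cexp (c ^ 2 * z ^ 2 / (2 * α))) := by
  have hq := natDegree_derivative_gaussianCumulantPoly_le 0 α⁻¹
  refine ⟨(expDerivPoly (gaussianCumulantPoly 0 α⁻¹) n).comp (C (-c) * X), ?_, ?_, fun z ↦ ?_⟩
  · calc ((expDerivPoly (gaussianCumulantPoly 0 α⁻¹) n).comp (C (-c) * X)).natDegree
      _ ≤ n * 1 * 1 := natDegree_comp_le.trans
        (Nat.mul_le_mul (natDegree_expDerivPoly_le hq n)
          ((natDegree_C_mul_le _ _).trans natDegree_X_le))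
      _ = n := by ring
  · have hcoeff : (expDerivPoly (gaussianCumulantPoly 0 α⁻¹) n).coeff n = (α : ℂ)⁻¹ ^ n := by
      simpa [derivative_gaussianCumulantPoly] using coeff_expDerivPoly hq n
    rw [comp_C_mul_X_coeff, hcoeff, ← mul_pow, inv_mul_eq_div]
  · have hintegrand (t : ℝ) : -(α / 2 : ℂ) * t ^ 2 - t * c * z =
        -(t - (0 : ℝ)) ^ 2 / (2 * (α⁻¹ : ℝ)) + -c * z * t := by
      push_cast
      field_simp
      ring
    have hcumulant : (gaussianCumulantPoly 0 α⁻¹).eval (-c * z) = c ^ 2 * z ^ 2 / (2 * α) := by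
      rw [eval_gaussianCumulantPoly]
      push_cast
      field_simp
      ring
    simp only [hintegrand, integral_pow_mul_cexp_neg_sq_add_mul 0 (inv_pos.2 hα), hcumulant,
      eval_comp, eval_mul, eval_C, eval_X, div_eq_mul_inv (2 * Real.pi)]

end Gaussian

/-- φ_n(z) = (a_n zⁿ + ⋯ + a₁z + a₀) e^{s²z²/(2(s²+2))} with leading coefficient
a_n = √(2|s|/(s²+2)) (-1)ⁿ sⁿ/(s²+2)ⁿ ≠ 0. -/
theorem phi_n_form (s : ℝ) (hs : s ≠ 0) (n : ℕ) (φn : ℂ → ℂ)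
    (hφ : ∀ z : ℂ, φn z = ((Real.sqrt (|s| / Real.pi) : ℝ) : ℂ) *
      ∫ t : ℝ, (t:ℂ)^n * Complex.exp (-(((s:ℂ)^2 + 2)/2) * (t:ℂ)^2 - (t:ℂ) * (s:ℂ) * z)) :
    ∃ a : ℕ → ℂ,
      a n = ((Real.sqrt (2*|s|/(s^2+2)) : ℝ) : ℂ) * (-1)^n * (s:ℂ)^n / ((s:ℂ)^2+2)^n ∧
      a n ≠ 0 ∧
      ∀ z : ℂ, φn z = (∑ k ∈ Finset.range (n+1), a k * z^k) *
        Complex.exp ((s:ℂ)^2 * z^2 / (2*((s:ℂ)^2+2))) := by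
  have hpos : 0 < s ^ 2 + 2 := by positivity
  have hne : (s : ℂ) ^ 2 + 2 ≠ 0 := by exact_mod_cast hpos.ne'
  have hconst : √(2 * |s| / (s ^ 2 + 2)) = √(|s| / Real.pi) * √(2 * Real.pi / (s ^ 2 + 2)) := by
    rw [← Real.sqrt_mul (by positivity)]
    field_simp
  have hconst0 : (√(2 * |s| / (s ^ 2 + 2)) : ℂ) ≠ 0 := ofReal_ne_zero.2 (by positivity)
  obtain ⟨p, hdeg, hcoeff, hint⟩ := exists_polynomial_integral_pow_mul_cexp hpos s n
  push_cast at hcoeff hint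
  refine ⟨fun k ↦ √(2 * |s| / (s ^ 2 + 2)) * p.coeff k, ?_, ?_, fun z ↦ ?_⟩
  · beta_reduce
    rw [hcoeff, div_pow, neg_pow]
    ring
  · beta_reduce
    rw [hcoeff]
    exact mul_ne_zero hconst0 (pow_ne_zero n (div_ne_zero (by simpa using hs) hne))
  · rw [hφ, hint, p.eval_eq_sum_range' (Nat.lt_succ_of_le hdeg), hconst]
    simp only [mul_assoc _ (p.coeff _), ← Finset.mul_sum]
    push_cast
    ring
end
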